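/- Let C be a small category, I and J types, and A : I → Type, B : J → Type families of types. Then the assignment sending a pair of objects ((i, c), (j, d)) of S_C(I,A)ᵒᵖ × S_C(J,B) to the type Π (b : B(j)), Σ (a : A(i)), (c(a) ⟶ d(b)), with action on morphisms defined as follows, is a functor S_C(I,A)ᵒᵖ × S_C(J,B) ⥤ Type: given φ : (i₀, c₀) ⟶ (i, c) in S_C(I,A), ψ : (j, d) ⟶ (j₁, d₁) in S_C(J,B), and an element h of the value at ((i,c),(j,d)), the image at b₁ : B(j₁) is (a₀, f ≫ g ≫ g₁), where ψ(b₁) = (b, g₁), h(b) = (a, g), and φ(a) = (a₀, f). That is, this action preserves identities and composition. -/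

import Mathlib

open CategoryTheory

universe u v

variable (C : Type u) [Category.{v} C]

/-- Objects of the selection category `S_C(I,A)`: pairs `(i, c)` with `c : A i → ob C`. -/
def SelObj (I : Type u) (A : I → Type u) : Type _ := Σ i : I, (A i → C)

variable {C}

/-- Morphisms of the selection category. -/
def SelHom {I : Type u} {A : I → Type u} (x y : SelObj C I A) : Type _ :=
  ∀ a' : A y.1, Σ a : A x.1, (x.2 a ⟶ y.2 a')

/-- Identity morphisms of the selection category. -/
def selId {I : Type u} {A : I → Type u} (x : SelObj C I A) : SelHom x x :=
  fun a => ⟨a, 𝟙 (x.2 a)⟩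

/-- Composition in the selection category. -/
def selComp {I : Type u} {A : I → Type u} {x y z : SelObj C I A}
    (φ : SelHom x y) (ψ : SelHom y z) : SelHom x z :=
  fun a'' => ⟨(φ (ψ a'').1).1, (φ (ψ a'').1).2 ≫ (ψ a'').2⟩

/-- The value of the hom-profunctor at `((i,c),(j,d))`:
`Π (b : B j), Σ (a : A i), (c a ⟶ d b)`. -/
def homProfObj {I : Type u} {A : I → Type u} {J : Type u} {B : J → Type u}
    (x : SelObj C I A) (y : SelObj C J B) : Type _ :=
  ∀ b : B y.1, Σ a : A x.1, (x.2 a ⟶ y.2 b)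

/-- The action of the hom-profunctor on morphisms: given `φ : x₀ ⟶ x` in `S_C(I,A)`,
`ψ : y ⟶ y₁` in `S_C(J,B)` and `h` in the value at `(x, y)`, its image at `b₁` is
`(a₀, f ≫ g ≫ g₁)` where `ψ b₁ = (b, g₁)`, `h b = (a, g)` and `φ a = (a₀, f)`. -/
def homProfMap {I : Type u} {A : I → Type u} {J : Type u} {B : J → Type u}
    {x₀ x : SelObj C I A} {y y₁ : SelObj C J B}
    (φ : SelHom x₀ x) (ψ : SelHom y y₁) (h : homProfObj x y) : homProfObj x₀ y₁ :=
  fun b₁ => ⟨(φ (h (ψ b₁).1).1).1, (φ (h (ψ b₁).1).1).2 ≫ (h (ψ b₁).1).2 ≫ (ψ b₁).2⟩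

/-- the assignment `((i,c),(j,d)) ↦ Π (b : B j), Σ (a : A i), (c a ⟶ d b)`,
with the above action on morphisms, is a functor `S_C(I,A)ᵒᵖ × S_C(J,B) ⥤ Type`: it
preserves identities and composition. -/
theorem homProf_functorial {I : Type u} {A : I → Type u} {J : Type u} {B : J → Type u} :
    (∀ (x : SelObj C I A) (y : SelObj C J B) (h : homProfObj x y),
      homProfMap (selId x) (selId y) h = h) ∧
    (∀ (x₁ x₀ x : SelObj C I A) (y y₁ y₂ : SelObj C J B)
      (φ' : SelHom x₁ x₀) (φ : SelHom x₀ x) (ψ : SelHom y y₁) (ψ' : SelHom y₁ y₂)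
      (h : homProfObj x y),
      homProfMap (selComp φ' φ) (selComp ψ ψ') h = homProfMap φ' ψ' (homProfMap φ ψ h)) := by
  refine ⟨fun x y h => funext fun b => ?_, fun x₁ x₀ x y y₁ y₂ φ' φ ψ ψ' h => funext fun b => ?_⟩
  -- In both cases the first components agree definitionally, so only an equation of
  -- morphisms of `C` remains: the unit laws, respectively associativity.
  · exact Sigma.ext rfl (heq_of_eq ((Category.id_comp _).trans (Category.comp_id _)))
  · refine Sigma.ext rfl (heq_of_eq ?_)
    simp only [homProfMap, selComp, Category.assoc]
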